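/- Let W be a nonnegative integrable random variable on a probability space, let δ > 0, and let (a_n) be a sequence of positive reals with a_n/n → 1. Then n · E[ 4W/(δ a_n) − 1 + exp(−4W/(δ a_n)) ] → 0 as n → ∞. -/

import Mathlib

open MeasureTheory Filter Real

/-! Put `g x = x - 1 + exp (-x)`, so that `g 0 = g' 0 = 0` and `0 ≤ g x ≤ x` for `x ≥ 0`. As
`t → ∞`, `t * g (w / t)` tends to `w * g' 0 = 0` for every `w ≥ 0`, and `t * g (W / t)` is
dominated by `W`; hence `t * E[g (W / t)] → 0`. A prefactor of order `O(t)`, such as `n` for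
`t = δ * a n / 4`, gives the same limit. -/

open Asymptotics Set
open scoped Topology

section IntegralCompDiv

variable {E : Type*} [NormedAddCommGroup E] [NormedSpace ℝ E] {g : ℝ → E} {g' : E}

lemma tendsto_smul_comp_div_atTop (hg_zero : g 0 = 0) (hg : HasDerivWithinAt g g' (Ici 0) 0)
    {w : ℝ} (hw : 0 ≤ w) :
    Tendsto (fun t : ℝ ↦ t • g (w / t)) atTop (𝓝 (w • g')) := by
  have h_zero : Tendsto (fun t : ℝ ↦ w / t) atTop (𝓝 0) := tendsto_id.const_div_atTop w
  have h_nonneg : ∀ᶠ t : ℝ in atTop, 0 + w / t ∈ Ici (0 : ℝ) := by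
    filter_upwards [eventually_ge_atTop 0] with t ht
    simpa only [zero_add, mem_Ici] using div_nonneg hw ht
  have h_mul : Tendsto (fun t : ℝ ↦ t • (w / t)) atTop (𝓝 w) := by
    refine tendsto_nhds_of_eventually_eq ?_
    filter_upwards [eventually_ne_atTop 0] with t ht using mul_div_cancel₀ w ht
  simpa [hg_zero] using hg.hasFDerivWithinAt.lim h_zero h_nonneg h_mul

lemma norm_smul_comp_div_le {C : ℝ} (hg_le : ∀ x, 0 ≤ x → ‖g x‖ ≤ C * x) {w t : ℝ}
    (hw : 0 ≤ w) (ht : 0 < t) : ‖t • g (w / t)‖ ≤ C * w :=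
  calc ‖t • g (w / t)‖ = t * ‖g (w / t)‖ := norm_smul_of_nonneg ht.le _
    _ ≤ t * (C * (w / t)) := by gcongr; exact hg_le _ (by positivity)
    _ = C * w := by field_simp

lemma tendsto_smul_integral_comp_div_atTop [CompleteSpace E] {Ω : Type*} [MeasurableSpace Ω]
    {μ : Measure Ω} {W : Ω → ℝ} (hW_nonneg : 0 ≤ᵐ[μ] W) (hW_int : Integrable W μ)
    (hg_meas : StronglyMeasurable g) {C : ℝ} (hg_le : ∀ x, 0 ≤ x → ‖g x‖ ≤ C * x)
    (hg : HasDerivWithinAt g g' (Ici 0) 0) :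
    Tendsto (fun t : ℝ ↦ t • ∫ ω, g (W ω / t) ∂μ) atTop (𝓝 ((∫ ω, W ω ∂μ) • g')) := by
  have hg_zero : g 0 = 0 := by simpa using hg_le 0 le_rfl
  simp_rw [← integral_smul, ← integral_smul_const]
  refine tendsto_integral_filter_of_dominated_convergence (fun ω ↦ C * W ω) ?_ ?_
    (hW_int.const_mul C) ?_
  · refine .of_forall fun t ↦ AEStronglyMeasurable.const_smul ?_ t
    exact hg_meas.aestronglyMeasurable.comp_aemeasurable (hW_int.aemeasurable.div_const t)
  · filter_upwards [eventually_gt_atTop 0] with t ht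
    filter_upwards [hW_nonneg] with ω hω using norm_smul_comp_div_le hg_le hω ht
  · filter_upwards [hW_nonneg] with ω hω using tendsto_smul_comp_div_atTop hg_zero hg hω

end IntegralCompDiv

lemma hasDerivAt_sub_one_add_exp_neg (x : ℝ) :
    HasDerivAt (fun x ↦ x - 1 + exp (-x)) (1 - exp (-x)) x := by
  simpa [sub_eq_add_neg] using ((hasDerivAt_id' x).sub_const 1).fun_add (hasDerivAt_neg x).exp

lemma abs_sub_one_add_exp_neg_le {x : ℝ} (hx : 0 ≤ x) : |x - 1 + exp (-x)| ≤ x := by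
  have h_lower : -x + 1 ≤ exp (-x) := add_one_le_exp (-x)
  have h_upper : exp (-x) ≤ 1 := exp_le_one_iff.mpr (neg_nonpos.mpr hx)
  exact abs_le.mpr ⟨by linarith, by linarith⟩

section LaplaceRemainder

variable {Ω : Type*} [MeasurableSpace Ω] {μ : Measure Ω} {W : Ω → ℝ}

lemma tendsto_mul_integral_sub_one_add_exp_neg_div_atTop (hW_nonneg : 0 ≤ᵐ[μ] W)
    (hW_int : Integrable W μ) :
    Tendsto (fun t : ℝ ↦ t * ∫ ω, (W ω / t - 1 + exp (-(W ω / t))) ∂μ) atTop (𝓝 0) := by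
  have h_meas : StronglyMeasurable fun x : ℝ ↦ x - 1 + exp (-x) := by fun_prop
  have h_le : ∀ x : ℝ, 0 ≤ x → ‖x - 1 + exp (-x)‖ ≤ 1 * x := fun x hx ↦ by
    simpa only [one_mul, norm_eq_abs] using abs_sub_one_add_exp_neg_le hx
  simpa using tendsto_smul_integral_comp_div_atTop hW_nonneg hW_int h_meas h_le
    (hasDerivAt_sub_one_add_exp_neg 0).hasDerivWithinAt

theorem statement_19_general (hW_nonneg : 0 ≤ᵐ[μ] W) (hW_int : Integrable W μ)
    {ι : Type*} {l : Filter ι} {r a : ι → ℝ} (ha : Tendsto a l atTop) (hr : r =O[l] a) :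
    Tendsto (fun i ↦ r i * ∫ ω, (W ω / a i - 1 + exp (-(W ω / a i))) ∂μ) l (𝓝 0) :=
  (hr.mul (isBigO_refl _ l)).trans_tendsto
    ((tendsto_mul_integral_sub_one_add_exp_neg_div_atTop hW_nonneg hW_int).comp ha)

end LaplaceRemainder

/-- Let `W` be a nonnegative integrable random variable, `δ > 0`, and `(a n)` a
sequence of positive reals with `a n / n → 1`. Then
`n * E[4W/(δ aₙ) − 1 + exp(−4W/(δ aₙ))] → 0`. -/
theorem statement_19
    {Ω : Type*} [MeasurableSpace Ω] (P : Measure Ω) [IsProbabilityMeasure P]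
    (W : Ω → ℝ) (hW_nonneg : ∀ᵐ ω ∂P, 0 ≤ W ω) (hW_int : Integrable W P)
    (δ : ℝ) (hδ : 0 < δ)
    (a : ℕ → ℝ) (ha_pos : ∀ n, 0 < a n)
    (ha : Tendsto (fun n : ℕ => a n / (n : ℝ)) atTop (nhds 1)) :
    Tendsto
      (fun n : ℕ => (n : ℝ) *
        ∫ ω, (4 * W ω / (δ * a n) - 1 + Real.exp (-(4 * W ω) / (δ * a n))) ∂P)
      atTop (nhds 0) := by
  have ha_equiv : (fun n : ℕ ↦ (n : ℝ)) ~[atTop] a := (isEquivalent_of_tendsto_one ha).symm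
  have hW_scaled_nonneg : ∀ᵐ ω ∂P, 0 ≤ 4 * W ω / δ := by
    filter_upwards [hW_nonneg] with ω hω using by positivity
  simpa only [div_div, neg_div] using statement_19_general hW_scaled_nonneg
    ((hW_int.const_mul 4).div_const δ)
    (ha_equiv.tendsto_atTop tendsto_natCast_atTop_atTop) ha_equiv.isBigO
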